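/- Let X be a real Banach space and let U, V ⊂ X be nonempty bounded sets. Suppose there exist a nonzero continuous linear functional x₀* on X, a real number c, and ε₀ > 0 such that U ⊂ {x ∈ X : x₀*(x) = c} and V ⊂ {x ∈ X : x₀*(x) < c − ε₀}. Then every slice of U is at the same time a slice of U ∪ V; that is, for every nonzero continuous linear functional x* on X and ε > 0 there exist a nonzero continuous linear functional y* on X and δ > 0 with S(U ∪ V, y*, δ) = S(U, x*, ε). -/

import Mathlib

open Bornology Set Pointwise

variable {X : Type*} [NormedAddCommGroup X] [NormedSpace ℝ X]

/-- The sliceSet of `A` given by the functional `f` and `ε > 0`. -/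
noncomputable def sliceSet (A : Set X) (f : X →L[ℝ] ℝ) (ε : ℝ) : Set X :=
  {x ∈ A | sSup (f '' A) - ε < f x}

/-- `S` is a sliceSet of `A`: a nonempty set of the form `sliceSet A f ε` with `f ≠ 0`, `ε > 0`. -/
def IsSlice (A S : Set X) : Prop :=
  S.Nonempty ∧ ∃ f : X →L[ℝ] ℝ, f ≠ 0 ∧ ∃ ε : ℝ, 0 < ε ∧ S = sliceSet A f ε

/-- A sequence of subsets of `A` is determining if every set `B` meeting all of them
has `A` inside the closed convex hull of `B`. -/
def Determining (A : Set X) (V : ℕ → Set X) : Prop :=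
  ∀ B : Set X, (∀ n, (B ∩ V n).Nonempty) → A ⊆ closure (convexHull ℝ B)

/-- A bounded set is slicely countably determined if it has a determining sequence of slices. -/
def IsSCD (A : Set X) : Prop :=
  ∃ V : ℕ → Set X, (∀ n, IsSlice A (V n)) ∧ Determining A V

/-- The Daugavet property: every rank-one operator `x ↦ f x • y` satisfies the
Daugavet equation `‖Id + T‖ = 1 + ‖T‖`. -/
def DaugavetProperty (X : Type*) [NormedAddCommGroup X] [NormedSpace ℝ X] : Prop :=
  ∀ (f : X →L[ℝ] ℝ) (y : X),
    ‖ContinuousLinearMap.id ℝ X + f.smulRight y‖ = 1 + ‖f.smulRight y‖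

/-!
Adding `t • x₀` to `f` translates `f` by the constant `t * c` on `U`, which leaves the slices of `U`
unchanged, while on `V` it raises `f` by at most `t * (c - ε₀)`. Since `f` is bounded above on `V`,
for large `t` all values on `V` lie below the threshold `sSup (f '' U) + t * c - ε` cutting out the
slice of `U`, so `V` changes neither the supremum nor the slice.
-/

section

open Filter

theorem sSup_image_union_eq_left {α : Type*} {g : α → ℝ} {s t : Set α} (hs : s.Nonempty)
    (hgs : BddAbove (g '' s)) (hgt : ∀ x ∈ t, g x ≤ sSup (g '' s)) :
    sSup (g '' (s ∪ t)) = sSup (g '' s) := by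
  have hlub : IsLUB (g '' s) (sSup (g '' s)) := isLUB_csSup (hs.image g) hgs
  have hlub_union : IsLUB (g '' (s ∪ t)) (sSup (g '' s)) := by
    rw [image_union]
    refine ⟨?_, fun b hb => hlub.2 fun y hy => hb (Or.inl hy)⟩
    rintro y (hy | ⟨x, hx, rfl⟩)
    · exact hlub.1 hy
    · exact hgt x hx
  exact hlub_union.csSup_eq (hs.inl.image g)

theorem sSup_image_eq_add_of_eqOn {α : Type*} {f g : α → ℝ} {s : Set α} {a : ℝ}
    (hs : s.Nonempty) (hf : BddAbove (f '' s)) (hg : EqOn g (fun x => f x + a) s) :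
    sSup (g '' s) = sSup (f '' s) + a := by
  rw [hg.image_eq, ← image_image (· + a) f s]
  exact ((OrderIso.addRight a).map_csSup' (hs.image f) hf).symm

theorem eventually_forall_add_mul_le {α : Type*} {f φ : α → ℝ} {s : Set α} {c η : ℝ}
    (hη : 0 < η) (hf : BddAbove (f '' s)) (hφ : ∀ x ∈ s, φ x ≤ c - η) (b : ℝ) :
    ∀ᶠ t : ℝ in atTop, ∀ x ∈ s, f x + t * φ x ≤ b + t * c := by
  obtain ⟨M, hM⟩ := hf
  have hlarge : ∀ᶠ t : ℝ in atTop, M - b ≤ t * η :=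
    (tendsto_id.atTop_mul_const hη).eventually_ge_atTop (M - b)
  filter_upwards [eventually_ge_atTop 0, hlarge] with t ht hMt x hx
  calc
    f x + t * φ x ≤ M + t * (c - η) :=
      add_le_add (hM (mem_image_of_mem f hx)) (mul_le_mul_of_nonneg_left (hφ x hx) ht)
    _ ≤ b + t * c := by linarith

theorem eventually_add_smul_ne_zero {E : Type*} [AddCommGroup E] [Module ℝ E] (f : E) {x : E}
    (hx : x ≠ 0) : ∀ᶠ t : ℝ in atTop, f + t • x ≠ 0 := by
  by_cases h : ∃ t₀ : ℝ, f + t₀ • x = 0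
  · obtain ⟨t₀, ht₀⟩ := h
    filter_upwards [eventually_ne_atTop t₀] with t ht hzero
    exact ht (smul_left_injective ℝ hx (add_left_cancel (hzero.trans ht₀.symm)))
  · exact Eventually.of_forall (not_exists.mp h)

theorem bddAbove_image_of_isBounded (f : X →L[ℝ] ℝ) {A : Set X} (hA : IsBounded A) :
    BddAbove (f '' A) :=
  (f.lipschitz.isBounded_image hA).bddAbove

theorem sliceSet_union_eq_left {U V : Set X} {g : X →L[ℝ] ℝ} {ε : ℝ} (hU : U.Nonempty)
    (hgU : BddAbove (g '' U)) (hε : 0 ≤ ε) (hgV : ∀ x ∈ V, g x ≤ sSup (g '' U) - ε) :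
    sliceSet (U ∪ V) g ε = sliceSet U g ε := by
  have hsup : sSup (g '' (U ∪ V)) = sSup (g '' U) :=
    sSup_image_union_eq_left hU hgU fun x hx => (hgV x hx).trans (sub_le_self _ hε)
  ext x
  simp only [sliceSet, hsup, mem_ofPred_eq]
  refine and_congr_left fun hlt => or_iff_left fun hxV => ?_
  exact (hgV x hxV).not_gt hlt

theorem sliceSet_eq_of_eqOn_add_const {U : Set X} {f g : X →L[ℝ] ℝ} {a : ℝ} (hU : U.Nonempty)
    (hf : BddAbove (f '' U)) (hg : EqOn g (fun x => f x + a) U) (ε : ℝ) :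
    sliceSet U g ε = sliceSet U f ε := by
  ext x
  simp only [sliceSet, sSup_image_eq_add_of_eqOn hU hf hg, mem_ofPred_eq]
  refine and_congr_right fun hx => ?_
  rw [hg hx, add_sub_right_comm, add_lt_add_iff_right]

theorem eventually_sliceSet_union_add_smul_eq {U V : Set X} {f x₀ : X →L[ℝ] ℝ} {c η ε : ℝ}
    (hU : U.Nonempty) (hfU : BddAbove (f '' U)) (hfV : BddAbove (f '' V)) (hη : 0 < η)
    (hUH : ∀ x ∈ U, x₀ x = c) (hVH : ∀ x ∈ V, x₀ x ≤ c - η) (hε : 0 ≤ ε) :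
    ∀ᶠ t : ℝ in atTop, sliceSet (U ∪ V) (f + t • x₀) ε = sliceSet U f ε := by
  filter_upwards [eventually_forall_add_mul_le hη hfV hVH (sSup (f '' U) - ε)] with t hV
  have htranslate : EqOn (f + t • x₀) (fun x => f x + t * c) U := fun x hx => by
    simp [hUH x hx]
  have hsup : sSup ((f + t • x₀) '' U) = sSup (f '' U) + t * c :=
    sSup_image_eq_add_of_eqOn hU hfU htranslate
  have hbdd : BddAbove ((f + t • x₀) '' U) := by
    rw [htranslate.image_eq, ← image_image (· + t * c) f U]
    exact (add_left_mono (a := t * c)).map_bddAbove hfU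
  have hbelow : ∀ x ∈ V, (f + t • x₀) x ≤ sSup ((f + t • x₀) '' U) - ε := fun x hx => by
    rw [hsup, add_sub_right_comm]
    exact hV x hx
  rw [sliceSet_union_eq_left hU hbdd hε hbelow, sliceSet_eq_of_eqOn_add_const hU hfU htranslate]

theorem slice_of_hyperplane_part_is_slice_of_union_general {U V : Set X} {f x₀ : X →L[ℝ] ℝ}
    {c ε₀ ε : ℝ} (hU : U.Nonempty) (hfU : BddAbove (f '' U)) (hfV : BddAbove (f '' V))
    (hx₀ : x₀ ≠ 0) (hε₀ : 0 < ε₀) (hUH : ∀ x ∈ U, x₀ x = c) (hVH : ∀ x ∈ V, x₀ x ≤ c - ε₀)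
    (hε : 0 ≤ ε) :
    ∃ g : X →L[ℝ] ℝ, g ≠ 0 ∧ sliceSet (U ∪ V) g ε = sliceSet U f ε := by
  obtain ⟨t, hne, hslice⟩ := ((eventually_add_smul_ne_zero f hx₀).and
    (eventually_sliceSet_union_add_smul_eq hU hfU hfV hε₀ hUH hVH hε)).exists
  exact ⟨f + t • x₀, hne, hslice⟩

end

theorem slice_of_hyperplane_part_is_slice_of_union
    {X : Type*} [NormedAddCommGroup X] [NormedSpace ℝ X] [CompleteSpace X]
    (U V : Set X) (hU : U.Nonempty) (hUb : IsBounded U)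
    (hV : V.Nonempty) (hVb : IsBounded V)
    (x₀ : X →L[ℝ] ℝ) (hx₀ : x₀ ≠ 0) (c : ℝ) (ε₀ : ℝ) (hε₀ : 0 < ε₀)
    (hUH : ∀ x ∈ U, x₀ x = c) (hVH : ∀ x ∈ V, x₀ x < c - ε₀) :
    ∀ (f : X →L[ℝ] ℝ), f ≠ 0 → ∀ ε : ℝ, 0 < ε →
      ∃ (g : X →L[ℝ] ℝ), g ≠ 0 ∧ ∃ δ : ℝ, 0 < δ ∧
        sliceSet (U ∪ V) g δ = sliceSet U f ε := by
  intro f _ ε hε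
  obtain ⟨g, hg, hslice⟩ := slice_of_hyperplane_part_is_slice_of_union_general hU
    (bddAbove_image_of_isBounded f hUb) (bddAbove_image_of_isBounded f hVb) hx₀ hε₀ hUH
    (fun x hx => (hVH x hx).le) hε.le
  exact ⟨g, hg, ε, hε, hslice⟩
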